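/- Let N be a weighted open chain of cycles C_1,…,C_m without bonuses, where for each j ∈ {1,…,m−1} the shared node 1^j has two incoming edges: the edge n^j → 1^j of weight w_1^j (within C_j) and the edge (k−1)^{j+1} → 1^j of weight w_2^j (within C_{j+1}). If w_1^j > w_2^j for all j ∈ {1,…,m−1}, then the coordination game on N is weakly acyclic. -/

import Mathlib

open scoped Classical

namespace CG

/-- Payoff of node `i` in a coordination game on a weighted directed graph
with adjacency `adj` (an edge `j → i` is `adj j i`), edge weights `w`,
bonuses `β`, under the joint strategy `s`. -/
noncomputable def payoff {V M : Type} [Fintype V] (adj : V → V → Prop)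
    (w : V → V → ℝ) (β : V → M → ℕ) (s : V → M) (i : V) : ℝ :=
  (∑ j ∈ Finset.univ.filter (fun j => adj j i ∧ s j = s i), w j i) + (β i (s i) : ℝ)

/-- A joint strategy assigns to every node a colour from its colour set. -/
def Valid {V M : Type} (C : V → Finset M) (s : V → M) : Prop :=
  ∀ i, s i ∈ C i

/-- `s'` is a profitable deviation of the (non-empty) coalition
`K = {i | s i ≠ s' i}` from `s`. -/
def ProfDev {V M : Type} [Fintype V] (adj : V → V → Prop) (w : V → V → ℝ)
    (β : V → M → ℕ) (C : V → Finset M) (s s' : V → M) : Prop :=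
  Valid C s' ∧ s ≠ s' ∧
    ∀ i, s i ≠ s' i → payoff adj w β s i < payoff adj w β s' i

/-- A profitable deviation of a single player. -/
def UniDev {V M : Type} [Fintype V] (adj : V → V → Prop) (w : V → V → ℝ)
    (β : V → M → ℕ) (C : V → Finset M) (s s' : V → M) : Prop :=
  ProfDev adj w β C s s' ∧ ∃ i, ∀ j, j ≠ i → s j = s' j

/-- A Nash equilibrium: no single player has a profitable deviation. -/
def IsNash {V M : Type} [Fintype V] (adj : V → V → Prop) (w : V → V → ℝ)
    (β : V → M → ℕ) (C : V → Finset M) (s : V → M) : Prop :=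
  Valid C s ∧ ∀ s', ¬ UniDev adj w β C s s'

/-- A strong equilibrium: no coalition has a profitable deviation. -/
def IsStrong {V M : Type} [Fintype V] (adj : V → V → Prop) (w : V → V → ℝ)
    (β : V → M → ℕ) (C : V → Finset M) (s : V → M) : Prop :=
  Valid C s ∧ ∀ s', ¬ ProfDev adj w β C s s'

/-- There is a finite improvement path of length `L` starting at `s`
(each step a profitable single-player deviation) ending in a Nash equilibrium. -/
def ImpPath {V M : Type} [Fintype V] (adj : V → V → Prop) (w : V → V → ℝ)
    (β : V → M → ℕ) (C : V → Finset M) (s : V → M) (L : ℕ) : Prop :=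
  ∃ σ : ℕ → V → M, σ 0 = s ∧
    (∀ t, t < L → UniDev adj w β C (σ t) (σ (t + 1))) ∧
    IsNash adj w β C (σ L)

/-- There is a finite c-improvement path of length `L` starting at `s`
(each step a profitable coalition deviation) ending in a strong equilibrium. -/
def CImpPath {V M : Type} [Fintype V] (adj : V → V → Prop) (w : V → V → ℝ)
    (β : V → M → ℕ) (C : V → Finset M) (s : V → M) (L : ℕ) : Prop :=
  ∃ σ : ℕ → V → M, σ 0 = s ∧
    (∀ t, t < L → ProfDev adj w β C (σ t) (σ (t + 1))) ∧
    IsStrong adj w β C (σ L)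

/-- Adjacency of the simple cycle `1 → 2 → ⋯ → n → 1` on `Fin n`. -/
def cycAdj (n : ℕ) : Fin n → Fin n → Prop :=
  fun i j => (i.val + 1) % n = j.val

/-- Adjacency of a chain of `m` cycles, each of `n` nodes: `node j i` is the
`(i+1)`-st node of the `(j+1)`-st cycle (`0`-based indices). -/
def chainAdj {V : Type} (m n : ℕ) (node : ℕ → ℕ → V) : V → V → Prop :=
  fun u v => ∃ j i, j < m ∧ i < n ∧ u = node j i ∧ v = node j ((i + 1) % n)

/-- `node`, `k` describe an open chain of `m ≥ 2` simple cycles, each on `n ≥ 3`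
nodes, where consecutive cycles `C_j, C_{j+1}` share exactly the node
`node j 0 = node (j+1) (k j)` (with `1 ≤ k j < n`) and the cycles are
otherwise pairwise disjoint, and every vertex lies on some cycle. -/
def IsOpenChain {V : Type} (m n : ℕ) (node : ℕ → ℕ → V) (k : ℕ → ℕ) : Prop :=
  2 ≤ m ∧ 3 ≤ n ∧
  (∀ j, j + 1 < m → 1 ≤ k j ∧ k j < n) ∧
  (∀ j, j + 1 < m → node j 0 = node (j + 1) (k j)) ∧
  (∀ j i j' i', j < m → i < n → j' < m → i' < n → node j i = node j' i' →
      (j = j' ∧ i = i') ∨ (j' = j + 1 ∧ i = 0 ∧ i' = k j) ∨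
      (j = j' + 1 ∧ i' = 0 ∧ i = k j')) ∧
  (∀ v : V, ∃ j i, j < m ∧ i < n ∧ node j i = v)

/-- As `IsOpenChain`, but additionally the last cycle shares exactly the node
`node (m-1) 0 = node 0 (k (m-1))` with the first one. -/
def IsClosedChain {V : Type} (m n : ℕ) (node : ℕ → ℕ → V) (k : ℕ → ℕ) : Prop :=
  2 ≤ m ∧ 3 ≤ n ∧
  (∀ j, j < m → 1 ≤ k j ∧ k j < n) ∧
  (∀ j, j + 1 < m → node j 0 = node (j + 1) (k j)) ∧
  node (m - 1) 0 = node 0 (k (m - 1)) ∧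
  (∀ j i j' i', j < m → i < n → j' < m → i' < n → node j i = node j' i' →
      (j = j' ∧ i = i') ∨ (j' = j + 1 ∧ i = 0 ∧ i' = k j) ∨
      (j = j' + 1 ∧ i' = 0 ∧ i = k j') ∨
      (j = m - 1 ∧ j' = 0 ∧ i = 0 ∧ i' = k (m - 1)) ∨
      (j' = m - 1 ∧ j = 0 ∧ i' = 0 ∧ i = k (m - 1))) ∧
  (∀ v : V, ∃ j i, j < m ∧ i < n ∧ node j i = v)

section Helpers

theorem pay_single {V M : Type} [Fintype V] {adj : V → V → Prop} (w : V → V → ℝ)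
    {v p : V} (h : ∀ u, adj u v ↔ u = p) (s : V → M) :
    payoff adj w (fun _ _ => 0) s v = if s p = s v then w p v else 0 := by
  unfold payoff
  have : Finset.univ.filter (fun j => adj j v ∧ s j = s v)
      = if s p = s v then {p} else ∅ := by
    ext u
    split_ifs with hs
    · simp only [Finset.mem_filter, Finset.mem_univ, true_and, h, Finset.mem_singleton]
      constructor
      · exact fun x => x.1
      · rintro rfl; exact ⟨rfl, hs⟩
    · simp only [Finset.mem_filter, Finset.mem_univ, true_and, h, Finset.notMem_empty, iff_false]
      rintro ⟨rfl, h2⟩; exact hs h2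
  rw [this]
  split_ifs <;> simp

theorem pay_double {V M : Type} [Fintype V] {adj : V → V → Prop} (w : V → V → ℝ)
    {v p q : V} (hpq : p ≠ q) (h : ∀ u, adj u v ↔ u = p ∨ u = q) (s : V → M) :
    payoff adj w (fun _ _ => 0) s v
      = (if s p = s v then w p v else 0) + (if s q = s v then w q v else 0) := by
  unfold payoff
  rw [← Finset.filter_filter]
  have : Finset.univ.filter (fun j => adj j v) = {p, q} := by
    ext u; simp [h]
  rw [this, Finset.sum_filter, Finset.sum_pair hpq]
  simp

theorem uni_update {V M : Type} [Fintype V] {adj : V → V → Prop} {w : V → V → ℝ}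
    {C : V → Finset M} {s : V → M} (hs : Valid C s) {v : V} {c : M} (hc : c ∈ C v)
    (hne : s v ≠ c)
    (hp : payoff adj w (fun _ _ => 0) s v
      < payoff adj w (fun _ _ => 0) (Function.update s v c) v) :
    UniDev adj w (fun _ _ => 0) C s (Function.update s v c) := by
  refine ⟨⟨?_, ?_, ?_⟩, v, ?_⟩
  · intro u
    by_cases h : u = v
    · subst h; simpa using hc
    · simpa [Function.update_of_ne h] using hs u
  · intro h
    apply hne
    have := congrFun h v
    simpa using this
  · intro u hu
    by_cases h : u = v
    · subst h; exact hp
    · simp [Function.update_of_ne h] at hu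
  · intro u h
    simp [Function.update_of_ne h]

theorem nash_of {V M : Type} [Fintype V] {adj : V → V → Prop} {w : V → V → ℝ}
    {C : V → Finset M} {s : V → M} (hs : Valid C s)
    (hp : ∀ v, ∀ c ∈ C v, s v ≠ c →
      payoff adj w (fun _ _ => 0) (Function.update s v c) v
        ≤ payoff adj w (fun _ _ => 0) s v) :
    IsNash adj w (fun _ _ => 0) C s := by
  refine ⟨hs, ?_⟩
  rintro s' ⟨⟨hv, hne, hpr⟩, v, hu⟩
  have h1 : s' = Function.update s v (s' v) := by
    ext u
    by_cases h : u = v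
    · subst h; simp
    · simp [Function.update_of_ne h, hu u h]
  have h2 : s v ≠ s' v := by
    intro h
    apply hne
    rw [h1, ← h]; simp
  have h3 := hpr v h2
  have h4 := hp v (s' v) (hv v) h2
  rw [← h1] at h4
  linarith

theorem path_of_reach {V M : Type} [Fintype V] {adj : V → V → Prop} {w : V → V → ℝ}
    {β : V → M → ℕ} {C : V → Finset M} {s t : V → M}
    (h : Relation.ReflTransGen (UniDev adj w β C) s t) (ht : IsNash adj w β C t) :
    ∃ L, ImpPath adj w β C s L := by
  induction h using Relation.ReflTransGen.head_induction_on with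
  | refl => exact ⟨0, fun _ => t, rfl, by simp, ht⟩
  | head h1 h2 ih =>
    rename_i a b
    obtain ⟨L, σ, h0, hσ, hn⟩ := ih
    refine ⟨L + 1, fun i => Nat.casesOn i a σ, rfl, ?_, hn⟩
    rintro (_ | i) hi
    · show UniDev adj w β C a (σ 0)
      rw [h0]; exact h1
    · exact hσ i (by omega)

variable {V : Type} [Fintype V] {M : Type} {m n : ℕ} {node : ℕ → ℕ → V} {k : ℕ → ℕ}

theorem adj_pos (hc : IsOpenChain m n node k) {j a : ℕ} (hj : j < m) (ha : 1 ≤ a) (han : a < n)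
    (u : V) : chainAdj m n node u (node j a) ↔
      u = node j (a - 1) ∨ ∃ i, j = i + 1 ∧ a = k i ∧ u = node i (n - 1) := by
  obtain ⟨hm, hn, hk, hsh, hinj, -⟩ := hc
  constructor
  · rintro ⟨j', i', hj', hi', rfl, he⟩
    have hmod : (i' + 1 < n ∧ (i' + 1) % n = i' + 1) ∨ (i' + 1 = n ∧ (i' + 1) % n = 0) := by
      rcases Nat.lt_or_ge (i' + 1) n with h | h
      · left; exact ⟨h, Nat.mod_eq_of_lt h⟩
      · right
        have : i' + 1 = n := by omega
        exact ⟨this, by rw [this]; simp⟩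
    rcases hinj j a j' _ hj han hj' (Nat.mod_lt _ (by omega)) he with h | h | h
    · left
      obtain ⟨rfl, h⟩ := h
      have : i' = a - 1 := by omega
      rw [this]
    · omega
    · right
      refine ⟨j', h.1, h.2.2, ?_⟩
      have : i' = n - 1 := by omega
      rw [this]
  · rintro (rfl | ⟨i, rfl, rfl, rfl⟩)
    · refine ⟨j, a - 1, hj, by omega, rfl, ?_⟩
      rw [Nat.sub_add_cancel ha, Nat.mod_eq_of_lt han]
    · refine ⟨i, n - 1, by omega, by omega, rfl, ?_⟩
      rw [Nat.sub_add_cancel (by omega), Nat.mod_self, hsh i hj]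

theorem adj_last (hc : IsOpenChain m n node k) {j : ℕ} (hj : j + 1 = m)
    (u : V) : chainAdj m n node u (node j 0) ↔ u = node j (n - 1) := by
  obtain ⟨hm, hn, hk, hsh, hinj, -⟩ := hc
  constructor
  · rintro ⟨j', i', hj', hi', rfl, he⟩
    have hmod : (i' + 1 < n ∧ (i' + 1) % n = i' + 1) ∨ (i' + 1 = n ∧ (i' + 1) % n = 0) := by
      rcases Nat.lt_or_ge (i' + 1) n with h | h
      · left; exact ⟨h, Nat.mod_eq_of_lt h⟩
      · right
        have : i' + 1 = n := by omega
        exact ⟨this, by rw [this]; simp⟩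
    rcases hinj j 0 j' _ (by omega) (by omega) hj' (Nat.mod_lt _ (by omega)) he with h | h | h
    · obtain ⟨rfl, h⟩ := h
      have : i' = n - 1 := by omega
      rw [this]
    · omega
    · have := hk j' (by omega)
      omega
  · rintro rfl
    refine ⟨j, n - 1, by omega, by omega, rfl, ?_⟩
    rw [Nat.sub_add_cancel (by omega), Nat.mod_self]

/-- the colour of the predecessor in the earlier cycle is unavailable -/
def HB (n : ℕ) (node : ℕ → ℕ → V) (k : ℕ → ℕ) (C : V → Finset M) (s : V → M) (j a : ℕ) : Prop :=
  ∀ i, j = i + 1 → a = k i → s (node i (n - 1)) ∉ C (node j a)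

def EB (n : ℕ) (node : ℕ → ℕ → V) (k : ℕ → ℕ) (s : V → M) (j a : ℕ) : Prop :=
  ∃ i, j = i + 1 ∧ a = k i ∧ s (node j a) = s (node i (n - 1))

/-- `v` is content with the predecessor `p` -/
def Rest (w : V → V → ℝ) (C : V → Finset M) (s : V → M) (p v : V) : Prop :=
  s v = s p ∨ s p ∉ C v ∨ w p v = 0

def Ok (n : ℕ) (node : ℕ → ℕ → V) (k : ℕ → ℕ) (w : V → V → ℝ) (C : V → Finset M)
    (s : V → M) (j a : ℕ) : Prop :=
  EB n node k s j a ∨ (HB n node k C s j a ∧ Rest w C s (node j (a - 1)) (node j a))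

theorem ok_congr {w : V → V → ℝ} {C : V → Finset M} {s t : V → M} {j a : ℕ}
    (h1 : t (node j a) = s (node j a)) (h2 : t (node j (a - 1)) = s (node j (a - 1)))
    (h3 : ∀ i, j = i + 1 → a = k i → t (node i (n - 1)) = s (node i (n - 1)))
    (h : Ok n node k w C s j a) : Ok n node k w C t j a := by
  rcases h with ⟨i, hi, ha, h⟩ | ⟨h, h'⟩
  · left; exact ⟨i, hi, ha, by rw [h1, h3 i hi ha, h]⟩
  · right
    refine ⟨fun i hi ha => by rw [h3 i hi ha]; exact h i hi ha, ?_⟩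
    unfold Rest at *
    rw [h1, h2]; exact h'

variable {w : V → V → ℝ} {C : V → Finset M}

theorem move_par (hc : IsOpenChain m n node k) 
    (hw : ∀ u v, chainAdj m n node u v → 0 ≤ w u v)
    {s : V → M} (hs : Valid C s) {j a : ℕ} (hj : j < m) (ha : 1 ≤ a) (han : a < n)
    (hH : HB n node k C s j a) (hR : ¬ Rest w C s (node j (a - 1)) (node j a)) :
    UniDev (chainAdj m n node) w (fun _ _ => 0) C s
      (Function.update s (node j a) (s (node j (a - 1)))) := by
  have hadj := adj_pos hc hj ha han
  obtain ⟨hm, hn, hk, hsh, hinj, -⟩ := hc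
  unfold Rest at hR
  push Not at hR
  obtain ⟨h1, h2, h3⟩ := hR
  have hpos : 0 < w (node j (a - 1)) (node j a) :=
    lt_of_le_of_ne (hw _ _ ((hadj _).2 (Or.inl rfl))) (Ne.symm h3)
  have hne : node j (a - 1) ≠ node j a := by
    intro h
    have := hinj _ _ _ _ hj (by omega) hj han h
    omega
  apply uni_update hs h2 h1
  by_cases hS : ∃ i, j = i + 1 ∧ a = k i
  · obtain ⟨i, rfl, rfl⟩ := hS
    have hq : s (node i (n - 1)) ∉ C (node (i + 1) (k i)) := hH i rfl rfl
    have hne2 : node i (n - 1) ≠ node (i + 1) (k i) := by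
      intro h
      have := hinj _ _ _ _ (by omega) (by omega) hj han h
      omega
    have hne3 : node (i + 1) (k i - 1) ≠ node i (n - 1) := by
      intro h
      have := hinj _ _ _ _ hj (by omega) (by omega) (by omega) h
      omega
    have hadj' : ∀ u, chainAdj m n node u (node (i + 1) (k i)) ↔
        u = node (i + 1) (k i - 1) ∨ u = node i (n - 1) := by
      intro u
      rw [hadj]
      constructor
      · rintro (h | ⟨i', hi', -, h⟩)
        · exact Or.inl h
        · obtain rfl : i = i' := by omega
          exact Or.inr h
      · rintro (h | h)
        · exact Or.inl h
        · exact Or.inr ⟨i, rfl, rfl, h⟩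
    rw [pay_double w hne3 hadj', pay_double w hne3 hadj']
    have e1 : s (node i (n - 1)) ≠ s (node (i + 1) (k i)) := fun h => hq (h ▸ hs _)
    have e2 : s (node i (n - 1)) ≠ s (node (i + 1) (k i - 1)) := fun h => hq (h ▸ h2)
    simp [Function.update_of_ne hne, Function.update_of_ne hne2, e1, e2, Ne.symm h1, hpos]
  · have hadj' : ∀ u, chainAdj m n node u (node j a) ↔ u = node j (a - 1) := by
      intro u
      rw [hadj]
      constructor
      · rintro (h | ⟨i', hi', h', h⟩)
        · exact h
        · exact absurd ⟨i', hi', h'⟩ hS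
      · exact Or.inl
    rw [pay_single w hadj', pay_single w hadj']
    simp [Function.update_of_ne hne, Ne.symm h1, hpos]

theorem adj_shared (hc : IsOpenChain m n node k) {i : ℕ} (hj : i + 1 < m) (u : V) :
    chainAdj m n node u (node i 0) ↔ u = node i (n - 1) ∨ u = node (i + 1) (k i - 1) := by
  have hk := hc.2.2.1 i hj
  rw [hc.2.2.2.1 i hj, adj_pos hc hj hk.1 hk.2]
  constructor
  · rintro (h | ⟨i', hi', -, h⟩)
    · exact Or.inr h
    · obtain rfl : i = i' := by omega
      exact Or.inl h
  · rintro (h | h)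
    · exact Or.inr ⟨i, rfl, rfl, h⟩
    · exact Or.inl h

theorem move_prim (hc : IsOpenChain m n node k) 
    (hw : ∀ u v, chainAdj m n node u v → 0 ≤ w u v)
    (hgt : ∀ j, j + 1 < m →
      w (node j (n - 1)) (node j 0) >
        w (node (j + 1) (k j - 1)) (node (j + 1) (k j)))
    {s : V → M} (hs : Valid C s) {j : ℕ} (hj : j < m)
    (hR : ¬ Rest w C s (node j (n - 1)) (node j 0)) :
    UniDev (chainAdj m n node) w (fun _ _ => 0) C s
      (Function.update s (node j 0) (s (node j (n - 1)))) := by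
  have hc' := hc
  obtain ⟨hm, hn, hk, hsh, hinj, -⟩ := hc'
  unfold Rest at hR
  push Not at hR
  obtain ⟨h1, h2, h3⟩ := hR
  have hne : node j (n - 1) ≠ node j 0 := by
    intro h
    have := hinj _ _ _ _ hj (by omega) hj (by omega) h
    omega
  apply uni_update hs h2 h1
  by_cases hS : j + 1 < m
  · have hkj := hk j hS
    have hadj := adj_shared hc hS
    have hne3 : node j (n - 1) ≠ node (j + 1) (k j - 1) := by
      intro h
      have := hinj _ _ _ _ hj (by omega) hS (by omega) h
      omega
    have hne2 : node (j + 1) (k j - 1) ≠ node j 0 := by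
      intro h
      have := hinj _ _ _ _ hS (by omega) hj (by omega) h
      omega
    rw [pay_double w hne3 hadj, pay_double w hne3 hadj]
    have hg := hgt j hS
    rw [← hsh j hS] at hg
    have hw2 := hw _ _ ((hadj (node (j + 1) (k j - 1))).2 (Or.inr rfl))
    simp only [Function.update_of_ne hne, Function.update_of_ne hne2, Function.update_self,
      if_true, if_neg (Ne.symm h1)]
    split_ifs <;> linarith
  · have hadj := adj_last hc (show j + 1 = m by omega)
    have hpos : 0 < w (node j (n - 1)) (node j 0) :=
      lt_of_le_of_ne (hw _ _ ((hadj _).2 rfl)) (Ne.symm h3)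
    rw [pay_single w hadj, pay_single w hadj]
    simp [Function.update_of_ne hne, Ne.symm h1, hpos]

theorem nash_final (hc : IsOpenChain m n node k) 
    (hw : ∀ u v, chainAdj m n node u v → 0 ≤ w u v)
    (hgt : ∀ j, j + 1 < m →
      w (node j (n - 1)) (node j 0) >
        w (node (j + 1) (k j - 1)) (node (j + 1) (k j)))
    {s : V → M} (hs : Valid C s)
    (hok : ∀ j < m, ∀ a, 1 ≤ a → a < n → Ok n node k w C s j a)
    (hR : ∀ j, m = j + 1 → Rest w C s (node j (n - 1)) (node j 0)) :
    IsNash (chainAdj m n node) w (fun _ _ => 0) C s := by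
  have hc' := hc
  obtain ⟨hm, hn, hk, hsh, hinj, hsurj⟩ := hc'
  have key : ∀ (v p : V), p ≠ v → (∀ u, chainAdj m n node u v ↔ u = p) →
      Rest w C s p v → ∀ c ∈ C v, s v ≠ c →
      payoff (chainAdj m n node) w (fun _ _ => 0) (Function.update s v c) v
        ≤ payoff (chainAdj m n node) w (fun _ _ => 0) s v := by
    intro v p hpv hadj hr c hcv hne
    rw [pay_single w hadj, pay_single w hadj]
    have h0 := hw _ _ ((hadj p).2 rfl)
    simp only [Function.update_of_ne hpv, Function.update_self]
    rcases hr with h | h | h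
    · rw [← h, if_neg hne, if_pos rfl]; exact h0
    · have e1 : s p ≠ c := fun e => h (e ▸ hcv)
      have e2 : s p ≠ s v := fun e => h (e ▸ hs v)
      rw [if_neg e1, if_neg e2]
    · rw [h]; simp
  apply nash_of hs
  intro v
  obtain ⟨j, a, hj, ha, rfl⟩ := hsurj v
  by_cases hlast : a = 0 ∧ j + 1 = m
  · obtain ⟨rfl, hlast⟩ := hlast
    refine key _ _ ?_ (adj_last hc hlast) (hR j hlast.symm)
    intro h
    have := hinj _ _ _ _ hj (by omega) hj (by omega) h
    omega
  by_cases hS : ∃ i, i + 1 < m ∧ node j a = node i 0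
  · obtain ⟨i, hi, e⟩ := hS
    rw [e]
    have hki := hk i hi
    have hok' := hok (i + 1) hi (k i) hki.1 hki.2
    have hadj := adj_shared hc hi
    have hne3 : node i (n - 1) ≠ node (i + 1) (k i - 1) := by
      intro h
      have := hinj _ _ _ _ (by omega) (by omega) hi (by omega) h
      omega
    have hne : node i (n - 1) ≠ node i 0 := by
      intro h
      have := hinj _ _ _ _ (by omega) (by omega) (by omega) (by omega) h
      omega
    have hne2 : node (i + 1) (k i - 1) ≠ node i 0 := by
      intro h
      have := hinj _ _ _ _ hi (by omega) (by omega) (by omega) h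
      omega
    have hg := hgt i hi
    unfold Ok EB HB at hok'
    rw [← hsh i hi] at hg hok'
    have hw2 := hw _ _ ((hadj (node (i + 1) (k i - 1))).2 (Or.inr rfl))
    intro c hcv hnec
    rw [pay_double w hne3 hadj, pay_double w hne3 hadj]
    simp only [Function.update_of_ne hne, Function.update_of_ne hne2, Function.update_self]
    rcases hok' with ⟨i', hi', -, h⟩ | ⟨h, hr⟩
    · obtain rfl : i = i' := by omega
      rw [← h, if_neg hnec, if_pos rfl]
      split_ifs <;> linarith
    · have h := h i rfl rfl
      have e1 : s (node i (n - 1)) ≠ c := fun e => h (e ▸ hcv)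
      have e2 : s (node i (n - 1)) ≠ s (node i 0) := fun e => h (e ▸ hs _)
      rw [if_neg e1, if_neg e2]
      rcases hr with h | h | h
      · rw [← h, if_neg hnec, if_pos rfl]; linarith
      · have e1 : s (node (i + 1) (k i - 1)) ≠ c := fun e => h (e ▸ hcv)
        have e2 : s (node (i + 1) (k i - 1)) ≠ s (node i 0) := fun e => h (e ▸ hs _)
        rw [if_neg e1, if_neg e2]
      · rw [h]; simp
  · have ha1 : 1 ≤ a := by
      by_contra h
      have h0 : a = 0 := by omega
      subst h0
      exact hS ⟨j, by omega, rfl⟩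
    have hns : ∀ i, j = i + 1 → a = k i → False := by
      rintro i rfl rfl
      exact hS ⟨i, hj, (hsh i hj).symm⟩
    have hadj : ∀ u, chainAdj m n node u (node j a) ↔ u = node j (a - 1) := by
      intro u
      rw [adj_pos hc hj ha1 ha]
      constructor
      · rintro (h | ⟨i', hi', h', h⟩)
        · exact h
        · exact (hns i' hi' h').elim
      · exact Or.inl
    refine key _ _ ?_ hadj ?_
    · intro h
      have := hinj _ _ _ _ hj (by omega) hj (by omega) h
      omega
    · rcases hok j hj a ha1 ha with ⟨i', hi', h', h⟩ | ⟨-, h⟩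
      · exact (hns i' hi' h').elim
      · exact h

/-- propagation of colour `c` from the node `node q 0` downwards -/
theorem propagate (hc : IsOpenChain m n node k) 
    (hw : ∀ u v, chainAdj m n node u v → 0 ≤ w u v)
    {s : V → M} {q : ℕ} (hq : q < m) (c : M)
    (hA : ∀ i < q + 1, ∀ a, 1 ≤ a → a < n → Ok n node k w C s i a) :
    ∀ (N : ℕ) (D : Finset V) (t : V → M), (Finset.univ \ D).card = N →
      Valid C t → node q 0 ∈ D → (∀ v ∈ D, t v = c) → (∀ v, v ∉ D → t v = s v) →
      (∀ v ∈ D, v ≠ node q 0 → ∃ i a, i < q + 1 ∧ 1 ≤ a ∧ a < n ∧ v = node i a ∧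
        node i (a - 1) ∈ D ∧ HB n node k C s i a) →
      ∃ t', Relation.ReflTransGen (UniDev (chainAdj m n node) w (fun _ _ => 0) C) t t' ∧
        Valid C t' ∧ (∀ i < q + 1, ∀ a, 1 ≤ a → a < n → Ok n node k w C t' i a) ∧
        t' (node q 0) = c ∧ (∀ v, t' v = s v ∨ t' v = c) ∧
        (∀ i a, q < i → i < m → a < n → node i a ≠ node q 0 → t' (node i a) = s (node i a)) := by
  have hc' := hc
  obtain ⟨hm, hn, hk, hsh, hinj, hsurj⟩ := hc'
  intro N
  induction N using Nat.strong_induction_on with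
  | _ N ih =>
  intro D t hN hv hr hD hnD hrep
  have rep : ∀ i a, i < q + 1 → 1 ≤ a → a < n → node i a ∈ D →
      node i (a - 1) ∈ D ∧ HB n node k C s i a := by
    intro i a hi ha han hmem
    have hne : node i a ≠ node q 0 := by
      intro h
      have := hinj _ _ _ _ (by omega) han hq (by omega) h
      omega
    obtain ⟨i', a', hi', ha', han', he, h1, h2⟩ := hrep _ hmem hne
    have := hinj _ _ _ _ (by omega) han (by omega) han' he
    obtain ⟨rfl, rfl⟩ : i = i' ∧ a = a' := by omega
    exact ⟨h1, h2⟩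
  have down : ∀ i a, i < q + 1 → a < n → node i a ∈ D → node i 0 ∈ D := by
    intro i a hi
    induction a with
    | zero => exact fun _ h => h
    | succ a iha =>
      intro han h
      exact iha (by omega) (rep i (a + 1) hi (by omega) han h).1
  by_cases hAt : ∀ i < q + 1, ∀ a, 1 ≤ a → a < n → Ok n node k w C t i a
  · refine ⟨t, Relation.ReflTransGen.refl, hv, hAt, hD _ hr, ?_, ?_⟩
    · intro v
      by_cases h : v ∈ D
      · exact Or.inr (hD v h)
      · exact Or.inl (hnD v h)
    · intro i a hi him han hne
      apply hnD
      intro hmem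
      obtain ⟨i', a', hi', ha', han', he, h1, h2⟩ := hrep _ hmem hne
      have := hinj _ _ _ _ (by omega) han (by omega) han' he
      omega
  · push Not at hAt
    obtain ⟨i, hi, a, ha, han, hnok⟩ := hAt
    have hp1 : ∀ i'', i = i'' + 1 → a = k i'' → t (node i'' (n - 1)) = s (node i'' (n - 1)) := by
      rintro i'' rfl rfl
      apply hnD
      intro hmem
      have h0 := down _ _ (by omega) (by omega) hmem
      apply hnok
      left
      refine ⟨i'', rfl, rfl, ?_⟩
      rw [← hsh i'' (by omega), hD _ h0, hD _ hmem]
    have hHt : HB n node k C s i a → HB n node k C t i a := by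
      intro h i'' h1 h2
      rw [hp1 i'' h1 h2]; exact h i'' h1 h2
    by_cases hvD : node i a ∈ D
    · exfalso
      obtain ⟨h1, h2⟩ := rep i a hi ha han hvD
      apply hnok
      right
      refine ⟨hHt h2, Or.inl ?_⟩
      rw [hD _ hvD, hD _ h1]
    · have htv := hnD _ hvD
      by_cases hpD : node i (a - 1) ∈ D
      · rcases hA i hi a ha han with ⟨i'', h1, h2, h3⟩ | ⟨hH, -⟩
        · exact absurd (Or.inl ⟨i'', h1, h2, by rw [htv, hp1 i'' h1 h2, h3]⟩) hnok
        · have hR : ¬ Rest w C t (node i (a - 1)) (node i a) :=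
            fun h => hnok (Or.inr ⟨hHt hH, h⟩)
          have hmv := move_par hc hw hv (by omega : i < m) ha han (hHt hH) hR
          have hlt : (Finset.univ \ insert (node i a) D).card < N := by
            rw [← hN]
            apply Finset.card_lt_card
            rw [Finset.ssubset_iff_of_subset]
            · exact ⟨node i a, by simp [hvD], by simp⟩
            · intro x; simp
          have htp := hD _ hpD
          rw [htp] at hmv
          have hfin := ih _ hlt (insert (node i a) D)
            (Function.update t (node i a) c) rfl hmv.1.1
            (Finset.mem_insert_of_mem hr)
          suffices hsuf : _ ∧ _ ∧ _ by
            obtain ⟨t', hre, hrest⟩ := hfin hsuf.1 hsuf.2.1 hsuf.2.2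
            exact ⟨t', Relation.ReflTransGen.head hmv hre, hrest⟩
          refine ⟨?_, ?_, ?_⟩
          · intro v hvm
            by_cases h : v = node i a
            · subst h; simp
            · rw [Function.update_of_ne h]
              exact hD v (Finset.mem_of_mem_insert_of_ne hvm h)
          · intro v hvm
            rw [Finset.mem_insert] at hvm
            rw [not_or] at hvm
            rw [Function.update_of_ne hvm.1]
            exact hnD v hvm.2
          · intro v hvm hne
            by_cases h : v = node i a
            · exact ⟨i, a, hi, ha, han, h, Finset.mem_insert_of_mem hpD, hH⟩
            · obtain ⟨i', a', e1, e2, e3, e4, e5, e6⟩ :=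
                hrep v (Finset.mem_of_mem_insert_of_ne hvm h) hne
              exact ⟨i', a', e1, e2, e3, e4, Finset.mem_insert_of_mem e5, e6⟩
      · exact absurd (ok_congr htv (hnD _ hpD) hp1 (hA i hi a ha han)) hnok

/-- convenient form of propagation -/
theorem propagate' (hc : IsOpenChain m n node k) 
    (hw : ∀ u v, chainAdj m n node u v → 0 ≤ w u v)
    {s : V → M} {q : ℕ} (hq : q < m) (c : M)
    (hA : ∀ i < q + 1, ∀ a, 1 ≤ a → a < n → Ok n node k w C s i a)
    (hmv : UniDev (chainAdj m n node) w (fun _ _ => 0) C s (Function.update s (node q 0) c)) :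
      ∃ t', Relation.ReflTransGen (UniDev (chainAdj m n node) w (fun _ _ => 0) C) s t' ∧
        Valid C t' ∧ (∀ i < q + 1, ∀ a, 1 ≤ a → a < n → Ok n node k w C t' i a) ∧
        t' (node q 0) = c ∧ (∀ v, t' v = s v ∨ t' v = c) ∧
        (∀ i a, q < i → i < m → a < n → node i a ≠ node q 0 → t' (node i a) = s (node i a)) := by
  obtain ⟨t', h, h'⟩ := propagate hc hw hq c hA _ {node q 0} (Function.update s (node q 0) c) rfl
    hmv.1.1 (by simp) (by simp) (by
      intro v hv
      rw [Function.update_of_ne]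
      simpa using hv) (by
      intro v hv hne
      exact absurd (by simpa using hv) hne)
  exact ⟨t', Relation.ReflTransGen.head hmv h, h'⟩

def Stage (n : ℕ) (node : ℕ → ℕ → V) (k : ℕ → ℕ) (w : V → V → ℝ) (C : V → Finset M)
    (s : V → M) (j : ℕ) : Prop :=
  Valid C s ∧ (∀ i < j, ∀ a, 1 ≤ a → a < n → Ok n node k w C s i a) ∧
    (∀ i, j = i + 1 → Rest w C s (node i (n - 1)) (node i 0))

theorem round_step (hc : IsOpenChain m n node k) 
    (hw : ∀ u v, chainAdj m n node u v → 0 ≤ w u v)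
    (hgt : ∀ j, j + 1 < m →
      w (node j (n - 1)) (node j 0) >
        w (node (j + 1) (k j - 1)) (node (j + 1) (k j)))
    {s : V → M} {j a : ℕ} (hj : j < m) (han : a + 1 < n)
    (hS : Stage n node k w C s j) (hb : ∀ b, 1 ≤ b → b ≤ a → Ok n node k w C s j b) :
    ∃ t, Relation.ReflTransGen (UniDev (chainAdj m n node) w (fun _ _ => 0) C) s t ∧
      Stage n node k w C t j ∧ ∀ b, 1 ≤ b → b ≤ a + 1 → Ok n node k w C t j b := by
  have hc' := hc
  obtain ⟨hm, hn, hk, hsh, hinj, hsurj⟩ := hc'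
  have hEH : ∀ t : V → M, (∀ i, j = i + 1 → Rest w C t (node i (n - 1)) (node i 0)) →
      EB n node k t j (a + 1) ∨ HB n node k C t j (a + 1) := by
    intro t hP
    by_cases hH : HB n node k C t j (a + 1)
    · exact Or.inr hH
    · left
      unfold HB at hH
      push Not at hH
      obtain ⟨i, h1, h2, h3⟩ := hH
      subst h1
      refine ⟨i, rfl, h2, ?_⟩
      have e := hsh i hj
      have hki := hk i hj
      rw [h2, ← e] at h3 ⊢
      rcases hP i rfl with h | h | h
      · exact h
      · exact absurd h3 h
      · exfalso
        have hg := hgt i hj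
        have hw2 := hw _ _ ((adj_shared hc hj (node (i + 1) (k i - 1))).2 (Or.inr rfl))
        rw [← e] at hg
        linarith
  obtain ⟨hv, hA, hP⟩ := hS
  by_cases hok : Ok n node k w C s j (a + 1)
  · refine ⟨s, Relation.ReflTransGen.refl, ⟨hv, hA, hP⟩, ?_⟩
    intro b hb1 hb2
    rcases Nat.lt_or_ge a b with h | h
    · obtain rfl : b = a + 1 := by omega
      exact hok
    · exact hb b hb1 h
  have hH : HB n node k C s j (a + 1) := by
    rcases hEH s hP with h | h
    · exact absurd (Or.inl h) hok
    · exact h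
  have hR : ¬ Rest w C s (node j a) (node j (a + 1)) := fun h => hok (Or.inr ⟨hH, h⟩)
  have hmv := move_par hc hw hv hj (by omega) han hH hR
  simp only [Nat.add_sub_cancel] at hmv
  by_cases hsd : ∃ i, j = i + 1 ∧ a + 1 = k i
  · obtain ⟨i, rfl, hk'⟩ := hsd
    have hv0 : node (i + 1) (a + 1) = node i 0 := by rw [hk', hsh i hj]
    rw [hv0] at hmv
    obtain ⟨t, hre, htv, htA, htr, htc, htu⟩ := propagate' hc hw (by omega : i < m) _ hA hmv
    have htP : Rest w C t (node i (n - 1)) (node i 0) := by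
      rcases htc (node i (n - 1)) with h | h
      · right; left
        rw [h, ← hv0]
        exact hH i rfl hk'
      · left; rw [htr, h]
    have hun : ∀ b, b ≤ a → t (node (i + 1) b) = s (node (i + 1) b) := by
      intro b hba
      apply htu _ _ (by omega) hj (by omega)
      rw [← hv0]
      intro h
      have := hinj _ _ _ _ hj (by omega) hj (by omega) h
      omega
    have htP' : ∀ i', i + 1 = i' + 1 → Rest w C t (node i' (n - 1)) (node i' 0) := by
      intro i' h
      obtain rfl : i = i' := by omega
      exact htP
    refine ⟨t, hre, ⟨htv, htA, htP'⟩, ?_⟩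
    intro b hb1 hb2
    rcases Nat.lt_or_ge a b with h | h
    · obtain rfl : b = a + 1 := by omega
      rcases hEH t htP' with h | h
      · exact Or.inl h
      · refine Or.inr ⟨h, Or.inl ?_⟩
        simp only [Nat.add_sub_cancel]
        rw [hun a le_rfl, hv0, htr]
    · apply ok_congr (hun b h) (hun (b - 1) (by omega)) _ (hb b hb1 h)
      intro i' h1 h2
      obtain rfl : i = i' := by omega
      omega
  · have hlow : ∀ i b, i < j → b < n → node i b ≠ node j (a + 1) := by
      intro i b hi hbn h
      rcases hinj _ _ _ _ (by omega) hbn hj han h with h | h | h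
      · omega
      · exact hsd ⟨i, h.1, h.2.2⟩
      · omega
    have hcyc : ∀ b, b ≤ a → node j b ≠ node j (a + 1) := by
      intro b hba h
      have := hinj _ _ _ _ hj (by omega) hj (by omega) h
      omega
    refine ⟨_, Relation.ReflTransGen.single hmv, ⟨hmv.1.1, ?_, ?_⟩, ?_⟩
    · intro i hi b hb1 hbn
      refine ok_congr ?_ ?_ ?_ (hA i hi b hb1 hbn)
      · exact Function.update_of_ne (hlow _ _ hi hbn) _ _
      · exact Function.update_of_ne (hlow _ _ hi (by omega)) _ _
      · intro i' h1 h2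
        exact Function.update_of_ne (hlow _ _ (by omega) (by omega)) _ _
    · intro i hi
      have := hP i hi
      unfold Rest at *
      rw [Function.update_of_ne (hlow _ _ (by omega) (by omega)),
        Function.update_of_ne (hlow _ _ (by omega) (by omega))]
      exact this
    · intro b hb1 hb2
      rcases Nat.lt_or_ge a b with h | h
      · obtain rfl : b = a + 1 := by omega
        refine Or.inr ⟨fun i h1 h2 => absurd ⟨i, h1, h2⟩ hsd, Or.inl ?_⟩
        simp only [Nat.add_sub_cancel]
        rw [Function.update_self, Function.update_of_ne (hcyc a le_rfl)]
      · refine ok_congr ?_ ?_ ?_ (hb b hb1 h)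
        · exact Function.update_of_ne (hcyc _ h) _ _
        · exact Function.update_of_ne (hcyc _ (by omega)) _ _
        · intro i' h1 h2
          exact Function.update_of_ne (hlow _ _ (by omega) (by omega)) _ _

theorem stage_step (hc : IsOpenChain m n node k) 
    (hw : ∀ u v, chainAdj m n node u v → 0 ≤ w u v)
    (hgt : ∀ j, j + 1 < m →
      w (node j (n - 1)) (node j 0) >
        w (node (j + 1) (k j - 1)) (node (j + 1) (k j)))
    {s : V → M} {j : ℕ} (hj : j < m) (hS : Stage n node k w C s j) :
    ∃ t, Relation.ReflTransGen (UniDev (chainAdj m n node) w (fun _ _ => 0) C) s t ∧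
      Stage n node k w C t (j + 1) := by
  have hc' := hc
  obtain ⟨hm, hn, hk, hsh, hinj, hsurj⟩ := hc'
  have hround : ∀ a, a < n →
      ∃ t, Relation.ReflTransGen (UniDev (chainAdj m n node) w (fun _ _ => 0) C) s t ∧
      Stage n node k w C t j ∧ ∀ b, 1 ≤ b → b ≤ a → Ok n node k w C t j b := by
    intro a
    induction a with
    | zero => exact fun _ => ⟨s, Relation.ReflTransGen.refl, hS, fun b h1 h2 => by omega⟩
    | succ a iha =>
      intro han
      obtain ⟨t, h1, h2, h3⟩ := iha (by omega)
      obtain ⟨t', h1', h2', h3'⟩ := round_step hc hw hgt hj han h2 h3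
      exact ⟨t', h1.trans h1', h2', h3'⟩
  obtain ⟨t, hre, ⟨hv, hA, hP⟩, hb⟩ := hround (n - 1) (by omega)
  have hA' : ∀ i < j + 1, ∀ a, 1 ≤ a → a < n → Ok n node k w C t i a := by
    intro i hi a ha han
    rcases Nat.lt_or_ge i j with h | h
    · exact hA i h a ha han
    · obtain rfl : i = j := by omega
      exact hb a ha (by omega)
  by_cases hR : Rest w C t (node j (n - 1)) (node j 0)
  · refine ⟨t, hre, hv, hA', ?_⟩
    intro i hi
    obtain rfl : j = i := by omega
    exact hR
  · have hmv := move_prim hc hw hgt hv hj hR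
    obtain ⟨t', hre', htv, htA, htr, htc, htu⟩ := propagate' hc hw hj _ hA' hmv
    refine ⟨t', hre.trans hre', htv, htA, ?_⟩
    intro i hi
    obtain rfl : j = i := by omega
    left
    rw [htr]
    rcases htc (node j (n - 1)) with h | h <;> exact h.symm

end Helpers

/-- A coordination game without bonuses on a weighted open chain of cycles in
which, at every shared node, the weight `w₁ʲ` of the incoming edge from within
the earlier cycle exceeds the weight `w₂ʲ` of the incoming edge from within
the later cycle, is weakly acyclic. -/
theorem weighted_open_chain_w1_gt_w2_weakly_acyclic
    {V : Type} [Fintype V] {M : Type} [Fintype M]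
    (m n : ℕ) (node : ℕ → ℕ → V) (k : ℕ → ℕ)
    (hchain : IsOpenChain m n node k)
    (w : V → V → ℝ) (hw : ∀ u v, chainAdj m n node u v → 0 ≤ w u v)
    (hgt : ∀ j, j + 1 < m →
      w (node j (n - 1)) (node j 0) >
        w (node (j + 1) (k j - 1)) (node (j + 1) (k j)))
    (C : V → Finset M) (hC : ∀ i, (C i).Nonempty) :
    ∀ s : V → M, Valid C s →
      ∃ L, ImpPath (chainAdj m n node) w (fun _ _ => 0) C s L := by
  intro s hs
  have hst : ∀ j, j ≤ m →
      ∃ t, Relation.ReflTransGen (UniDev (chainAdj m n node) w (fun _ _ => 0) C) s t ∧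
        Stage n node k w C t j := by
    intro j
    induction j with
    | zero =>
      exact fun _ => ⟨s, Relation.ReflTransGen.refl, hs, fun i hi => by omega,
        fun i hi => by omega⟩
    | succ j ih =>
      intro hj
      obtain ⟨t, h1, h2⟩ := ih (by omega)
      obtain ⟨t', h1', h2'⟩ := stage_step hchain hw hgt (by omega) h2
      exact ⟨t', h1.trans h1', h2'⟩
  obtain ⟨t, hre, hv, hA, hP⟩ := hst m le_rfl
  exact path_of_reach hre (nash_final hchain hw hgt hv hA hP)

end CG
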